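/- Let d ≥ 1 be an integer, let X ⊆ ℝ^d be a nonempty compact convex set with positive Lebesgue measure, and let m denote Lebesgue measure restricted to X. Let β > 0, λ > 0, L > 0 and δ₀ ∈ (0,1). Let F : ℝ^d → ℝ be a convex function and let ℓ : ℝ^d → ℝ be a convex function that is L-Lipschitz (with respect to the Euclidean norm). Let μ be the probability measure on X with density with respect to m proportional to exp(−β(F(x) + λ‖x‖²)), and let ν be the probability measure on X with density proportional to exp(−β(F(x) + ℓ(x) + λ‖x‖²)). Set η = 2βL²/λ + √(8βL² · log(2/δ₀) / λ). Then μ and ν are (η, δ₀)-indistinguishable, i.e., for every measurable S ⊆ X, μ(S) ≤ e^η · ν(S) + δ₀ and ν(S) ≤ e^η · μ(S) + δ₀. -/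

import Mathlib

open MeasureTheory

/-!
Let `V` be `m`-strongly convex and `φ` be `K`-Lipschitz on `X`. Applied to `exp (φ - V)` and
`exp (-φ - V)`, the Prékopa–Leindler inequality shows that
`E[exp φ] * E[exp (-φ)] ≤ exp (K ^ 2 / m)` under the Gibbs law with potential `V`: at the midpoint
of `x` and `y` the gain `m / 4 * ‖x - y‖ ^ 2` of strong convexity pays for
`φ x - φ y ≤ K * ‖x - y‖`. With `t * φ` in place of `φ`, this bounds `cgf t + cgf (-t)`, where
`cgf` is the cumulant generating function of `φ`.

Adding the loss to the potential tilts the Gibbs law by `φ`, a negative multiple of the loss, and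
the log-likelihood ratio is `φ - cgf 1`. Convexity of `cgf` puts the normalization `cgf 1` between
`-cgf (-t) / t` and `cgf t / t` for `t ≥ 1`, so Chernoff's bound for the event that the ratio
exceeds `η`, in either direction, involves only `cgf t + cgf (-t)`, and it remains to choose `t`.
-/

section

open Set ENNReal ProbabilityTheory
open scoped NNReal Pointwise

section BrunnMinkowski

lemma volume_add_le_volume_add_of_isCompact {A B : Set ℝ} (hA : IsCompact A) (hB : IsCompact B)
    (hAne : A.Nonempty) (hBne : B.Nonempty) : volume A + volume B ≤ volume (A + B) := by
  obtain ⟨a, ha, ha_max⟩ := hA.exists_isGreatest hAne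
  obtain ⟨b, hb, hb_min⟩ := hB.exists_isLeast hBne
  have overlap : (b +ᵥ A) ∩ (a +ᵥ B) ⊆ {a + b} := by
    rintro _ ⟨⟨x, hx, rfl⟩, y, hy, hxy⟩
    have := ha_max hx
    have := hb_min hy
    simp only [vadd_eq_add, mem_singleton_iff] at hxy ⊢
    linarith
  calc volume A + volume B = volume (b +ᵥ A) + volume (a +ᵥ B) := by simp only [measure_vadd]
    _ = volume ((b +ᵥ A) ∪ (a +ᵥ B)) :=
      (measure_union₀ (hB.vadd a).measurableSet.nullMeasurableSet
        (measure_mono_null overlap Real.volume_singleton)).symm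
    _ ≤ volume (A + B) := by
      refine measure_mono (union_subset ?_ ?_)
      · rintro _ ⟨x, hx, rfl⟩
        exact ⟨x, hx, b, hb, add_comm x b⟩
      · rintro _ ⟨y, hy, rfl⟩
        exact add_mem_add ha hy

theorem volume_add_le_volume_add {A B : Set ℝ} (hA : MeasurableSet A) (hB : MeasurableSet B)
    (hAne : A.Nonempty) (hBne : B.Nonempty) : volume A + volume B ≤ volume (A + B) := by
  obtain ⟨a, ha⟩ := hAne
  obtain ⟨b, hb⟩ := hBne
  rw [hA.measure_eq_iSup_isCompact, hB.measure_eq_iSup_isCompact]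
  simp only [iSup_and']
  refine ENNReal.biSup_add_biSup_le' ⟨∅, empty_subset A, isCompact_empty⟩
    ⟨∅, empty_subset B, isCompact_empty⟩ fun K ⟨hKA, hK⟩ M ⟨hMB, hM⟩ => ?_
  calc volume K + volume M ≤ volume (insert a K) + volume (insert b M) := by
        gcongr <;> exact subset_insert _ _
    _ ≤ volume (insert a K + insert b M) :=
      volume_add_le_volume_add_of_isCompact (hK.insert a) (hM.insert b)
        (insert_nonempty a K) (insert_nonempty b M)
    _ ≤ volume (A + B) := by
      gcongr
      exacts [insert_subset ha hKA, insert_subset hb hMB]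

lemma volume_add_le_two_mul_volume_of_midpoint_mem {A B C : Set ℝ} (hA : MeasurableSet A)
    (hB : MeasurableSet B) (hAne : A.Nonempty) (hBne : B.Nonempty)
    (hC : ∀ x ∈ A, ∀ y ∈ B, midpoint ℝ x y ∈ C) : volume A + volume B ≤ 2 * volume C := by
  have subset_smul : A + B ⊆ (2 : ℝ) • C := by
    rintro _ ⟨x, hx, y, hy, rfl⟩
    refine ⟨_, hC x hx y hy, ?_⟩
    simp [midpoint_eq_smul_add]
  calc volume A + volume B ≤ volume (A + B) := volume_add_le_volume_add hA hB hAne hBne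
    _ ≤ volume ((2 : ℝ) • C) := measure_mono subset_smul
    _ = 2 * volume C := by simp [Measure.addHaar_smul]

end BrunnMinkowski

section PrekopaLeindler

lemma lintegral_eq_lintegral_meas_ofReal_lt {α : Type*} [MeasurableSpace α] {μ : Measure α}
    {f : α → ℝ≥0∞} (hf : AEMeasurable f μ) (hf_top : ∀ᵐ x ∂μ, f x ≠ ∞) :
    ∫⁻ x, f x ∂μ = ∫⁻ s in Ioi (0 : ℝ), μ {x | ENNReal.ofReal s < f x} := by
  calc ∫⁻ x, f x ∂μ = ∫⁻ x, ENNReal.ofReal (f x).toReal ∂μ :=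
        lintegral_congr_ae (hf_top.mono fun x hx => (ENNReal.ofReal_toReal hx).symm)
    _ = ∫⁻ s in Ioi (0 : ℝ), μ {x | s < (f x).toReal} :=
      lintegral_eq_lintegral_meas_lt μ (ae_of_all _ fun _ => ENNReal.toReal_nonneg)
        hf.ennreal_toReal
    _ = ∫⁻ s in Ioi (0 : ℝ), μ {x | ENNReal.ofReal s < f x} :=
      setLIntegral_congr_fun measurableSet_Ioi fun s hs => measure_congr <|
        hf_top.mono fun x hx => propext (ENNReal.ofReal_lt_iff_lt_toReal hs.le hx).symm

lemma lintegral_add_lintegral_le_two_mul_of_iSup_eq_one {f g h : ℝ → ℝ≥0∞} (hf : Measurable f)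
    (hg : Measurable g) (hh : Measurable h) (hf_sup : ⨆ x, f x = 1) (hg_sup : ⨆ x, g x = 1)
    (hfgh : ∀ x y, f x * g y ≤ h (midpoint ℝ x y) ^ 2) :
    (∫⁻ x, f x) + ∫⁻ x, g x ≤ 2 * ∫⁻ x, h x := by
  rcases eq_or_ne (∫⁻ x, h x) ∞ with h_top | h_top
  · simp [h_top]
  have ne_top {u : ℝ → ℝ≥0∞} (hu : ⨆ x, u x = 1) (x : ℝ) : u x ≠ ∞ :=
    ne_top_of_le_ne_top one_ne_top (hu ▸ le_iSup u x)
  have nonempty_of_lt {u : ℝ → ℝ≥0∞} (hu : ⨆ x, u x = 1) {s : ℝ≥0∞} (hs : s < 1) :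
      {x | s < u x}.Nonempty := lt_iSup_iff.1 (hs.trans_eq hu.symm)
  have empty_of_le {u : ℝ → ℝ≥0∞} (hu : ⨆ x, u x = 1) {s : ℝ≥0∞} (hs : 1 ≤ s) :
      {x | s < u x} = ∅ := by
    simpa [eq_empty_iff_forall_notMem] using fun x => (hu ▸ le_iSup u x).trans hs
  rw [lintegral_eq_lintegral_meas_ofReal_lt hf.aemeasurable (ae_of_all _ (ne_top hf_sup)),
    lintegral_eq_lintegral_meas_ofReal_lt hg.aemeasurable (ae_of_all _ (ne_top hg_sup)),
    lintegral_eq_lintegral_meas_ofReal_lt hh.aemeasurable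
      ((ae_lt_top hh h_top).mono fun _ => LT.lt.ne),
    ← lintegral_const_mul' _ _ ofNat_ne_top, ← lintegral_add_left]
  · refine lintegral_mono fun s => ?_
    rcases lt_or_ge (ENNReal.ofReal s) 1 with hs | hs
    · refine volume_add_le_two_mul_volume_of_midpoint_mem (measurableSet_lt measurable_const hf)
        (measurableSet_lt measurable_const hg) (nonempty_of_lt hf_sup hs)
        (nonempty_of_lt hg_sup hs) fun x hx y hy => ?_
      refine lt_of_pow_lt_pow_left' 2 (lt_of_lt_of_le ?_ (hfgh x y))
      rw [sq]
      exact ENNReal.mul_lt_mul hx hy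
    · simp [empty_of_le hf_sup hs, empty_of_le hg_sup hs]
  · refine Antitone.measurable fun s t hst => measure_mono fun x hx => ?_
    exact (ENNReal.ofReal_le_ofReal hst).trans_lt hx

lemma ennreal_mul_le_sq_of_add_le_two_mul {a b c : ℝ≥0∞} (h : a + b ≤ 2 * c) : a * b ≤ c ^ 2 := by
  rcases eq_or_ne c ∞ with rfl | hc
  · simp
  have hab : a + b ≠ ∞ := ne_top_of_le_ne_top (mul_ne_top ofNat_ne_top hc) h
  lift a to ℝ≥0 using (add_ne_top.1 hab).1
  lift b to ℝ≥0 using (add_ne_top.1 hab).2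
  lift c to ℝ≥0 using hc
  norm_cast at h ⊢
  have : 4 * (a * b) ≤ 4 * c ^ 2 := by
    calc 4 * (a * b) = 4 * a * b := by ring
      _ ≤ (a + b) ^ 2 := four_mul_le_sq_add a b
      _ ≤ (2 * c) ^ 2 := by gcongr
      _ = 4 * c ^ 2 := by ring
  exact le_of_mul_le_mul_left this (by norm_num)

lemma lintegral_mul_lintegral_le_sq_of_iSup_ne_top {f g h : ℝ → ℝ≥0∞} (hf : Measurable f)
    (hg : Measurable g) (hh : Measurable h) (hf_sup : ⨆ x, f x ≠ ∞) (hg_sup : ⨆ x, g x ≠ ∞)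
    (hfgh : ∀ x y, f x * g y ≤ h (midpoint ℝ x y) ^ 2) :
    (∫⁻ x, f x) * ∫⁻ x, g x ≤ (∫⁻ x, h x) ^ 2 := by
  set a := ⨆ x, f x with ha
  set b := ⨆ x, g x with hb
  rcases eq_or_ne a 0 with ha0 | ha0
  · simp [iSup_eq_zero.1 ha0]
  rcases eq_or_ne b 0 with hb0 | hb0
  · simp [iSup_eq_zero.1 hb0]
  have hab0 : (a * b)⁻¹ ≠ 0 := ENNReal.inv_ne_zero.2 (mul_ne_top hf_sup hg_sup)
  have hab_top : (a * b)⁻¹ ≠ ∞ := ENNReal.inv_ne_top.2 (mul_ne_zero ha0 hb0)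
  have inv_mul_inv : a⁻¹ * b⁻¹ = (a * b)⁻¹ := (ENNReal.mul_inv (.inl ha0) (.inl hf_sup)).symm
  obtain ⟨c, hc⟩ : ∃ c : ℝ≥0∞, c ^ 2 = (a * b)⁻¹ :=
    ⟨((a * b)⁻¹) ^ (2⁻¹ : ℝ), by rw [← ENNReal.rpow_natCast, ← ENNReal.rpow_mul]; norm_num⟩
  have normalized : (∫⁻ x, a⁻¹ * f x) + ∫⁻ x, b⁻¹ * g x ≤ 2 * ∫⁻ x, c * h x := by
    refine lintegral_add_lintegral_le_two_mul_of_iSup_eq_one (hf.const_mul _) (hg.const_mul _)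
      (hh.const_mul _) ?_ ?_ fun x y => ?_
    · rw [← ENNReal.mul_iSup, ← ha, ENNReal.inv_mul_cancel ha0 hf_sup]
    · rw [← ENNReal.mul_iSup, ← hb, ENNReal.inv_mul_cancel hb0 hg_sup]
    · rw [mul_pow, hc, mul_mul_mul_comm, inv_mul_inv]
      gcongr
      exact hfgh x y
  have := ennreal_mul_le_sq_of_add_le_two_mul normalized
  rw [lintegral_const_mul _ hf, lintegral_const_mul _ hg, lintegral_const_mul _ hh,
    mul_pow, hc, mul_mul_mul_comm, inv_mul_inv] at this
  exact (ENNReal.mul_le_mul_iff_right hab0 hab_top).1 this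

/-- The Prékopa–Leindler inequality with weights `1/2, 1/2`, as a property of a measure, so that it
can be passed to product measures and along linear maps. The square avoids square roots of `f` and
`g`. -/
def MidpointPrekopaLeindler {E : Type*} [AddCommGroup E] [Module ℝ E] [MeasurableSpace E]
    (μ : Measure E) : Prop :=
  ∀ ⦃f g h : E → ℝ≥0∞⦄, Measurable f → Measurable g → Measurable h →
    (∀ x y, f x * g y ≤ h (midpoint ℝ x y) ^ 2) →
    (∫⁻ x, f x ∂μ) * ∫⁻ x, g x ∂μ ≤ (∫⁻ x, h x ∂μ) ^ 2

lemma lintegral_eq_iSup_lintegral_min_natCast {α : Type*} [MeasurableSpace α] {μ : Measure α}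
    {f : α → ℝ≥0∞} (hf : Measurable f) : ∫⁻ x, f x ∂μ = ⨆ n : ℕ, ∫⁻ x, min (f x) n ∂μ := by
  rw [← lintegral_iSup (fun n => hf.min measurable_const)
    fun m n hmn x => min_le_min le_rfl (by exact_mod_cast hmn)]
  refine lintegral_congr fun x => ?_
  rw [← inf_iSup_eq, ENNReal.iSup_natCast, inf_top_eq]

theorem midpointPrekopaLeindler_real : MidpointPrekopaLeindler (volume : Measure ℝ) := by
  intro f g h hf hg hh hfgh
  rw [lintegral_eq_iSup_lintegral_min_natCast hf, lintegral_eq_iSup_lintegral_min_natCast hg]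
  simp only [ENNReal.iSup_mul, ENNReal.mul_iSup]
  refine iSup₂_le fun n m => ?_
  have bounded (u : ℝ → ℝ≥0∞) (k : ℕ) : ⨆ x, min (u x) k ≠ ∞ :=
    ne_top_of_le_ne_top (natCast_ne_top k) (iSup_le fun _ => min_le_right _ _)
  exact lintegral_mul_lintegral_le_sq_of_iSup_ne_top (hf.min measurable_const)
    (hg.min measurable_const) hh (bounded f m) (bounded g n) fun x y =>
      (mul_le_mul' (min_le_left _ _) (min_le_left _ _)).trans (hfgh x y)

namespace MidpointPrekopaLeindler

variable {E G : Type*} [AddCommGroup E] [Module ℝ E] [MeasurableSpace E]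
  [AddCommGroup G] [Module ℝ G] [MeasurableSpace G] {μ : Measure E} {ν : Measure G}

lemma prod [SFinite ν] (hμ : MidpointPrekopaLeindler μ) (hν : MidpointPrekopaLeindler ν) :
    MidpointPrekopaLeindler (μ.prod ν) := by
  intro f g h hf hg hh hfgh
  rw [lintegral_prod _ hf.aemeasurable, lintegral_prod _ hg.aemeasurable,
    lintegral_prod _ hh.aemeasurable]
  refine hμ hf.lintegral_prod_right' hg.lintegral_prod_right' hh.lintegral_prod_right' fun x y => ?_
  exact hν (hf.comp measurable_prodMk_left) (hg.comp measurable_prodMk_left)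
    (hh.comp measurable_prodMk_left) fun u v => hfgh (x, u) (y, v)

lemma of_measurePreserving {e : E →ₗ[ℝ] G} (hμ : MidpointPrekopaLeindler μ)
    (he : MeasurePreserving e μ ν) : MidpointPrekopaLeindler ν := by
  intro f g h hf hg hh hfgh
  rw [← he.lintegral_comp hf, ← he.lintegral_comp hg, ← he.lintegral_comp hh]
  refine hμ (hf.comp he.measurable) (hg.comp he.measurable) (hh.comp he.measurable) fun x y => ?_
  have : e (midpoint ℝ x y) = midpoint ℝ (e x) (e y) := e.toAffineMap.map_midpoint x y
  simpa only [Function.comp_apply, this] using hfgh (e x) (e y)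

end MidpointPrekopaLeindler

theorem midpointPrekopaLeindler_pi :
    ∀ n : ℕ, MidpointPrekopaLeindler (volume : Measure (Fin n → ℝ))
  | 0 => by
    intro f g h _ _ _ hfgh
    rw [Measure.volume_pi_eq_dirac 0]
    simpa using hfgh 0 0
  | n + 1 => by
    have he : MeasurePreserving (Fin.consLinearEquiv ℝ fun _ : Fin (n + 1) => ℝ).toLinearMap
        (volume.prod volume) volume := by
      convert! (volume_preserving_piFinSuccAbove (fun _ : Fin (n + 1) => ℝ) 0).symm using 2
      ext x i
      simp
    exact (midpointPrekopaLeindler_real.prod (midpointPrekopaLeindler_pi n)).of_measurePreserving he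

theorem midpointPrekopaLeindler_volume (E : Type*) [NormedAddCommGroup E] [InnerProductSpace ℝ E]
    [FiniteDimensional ℝ E] [MeasurableSpace E] [BorelSpace E] :
    MidpointPrekopaLeindler (volume : Measure E) := by
  have euclidean : MidpointPrekopaLeindler
      (volume : Measure (EuclideanSpace ℝ (Fin (Module.finrank ℝ E)))) :=
    (midpointPrekopaLeindler_pi _).of_measurePreserving
      (e := (WithLp.linearEquiv 2 ℝ _).symm.toLinearMap) (PiLp.volume_preserving_toLp _)
  exact euclidean.of_measurePreserving (e := (stdOrthonormalBasis ℝ E).repr.symm.toLinearMap)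
    (stdOrthonormalBasis ℝ E).measurePreserving_repr_symm

end PrekopaLeindler

section Tilting

variable {α : Type*} [MeasurableSpace α] {μ : Measure α} {f : α → ℝ} {S : Set α} {t η : ℝ}

lemma convexOn_cgf [NeZero μ] : ConvexOn ℝ (integrableExpSet f μ) (cgf f μ) := by
  refine ⟨convex_integrableExpSet, fun s hs t ht a b ha hb hab => ?_⟩
  have hst := convex_integrableExpSet hs ht ha hb hab
  simp only [smul_eq_mul] at hst ⊢
  have exp_convex (x : α) : Real.exp ((a * s + b * t) * f x) ≤
      Real.exp (a * cgf f μ s + b * cgf f μ t) *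
        (a * (Real.exp (s * f x) / mgf f μ s) + b * (Real.exp (t * f x) / mgf f μ t)) := by
    have := convexOn_exp.2 (mem_univ (s * f x - cgf f μ s)) (mem_univ (t * f x - cgf f μ t))
      ha hb hab
    simp only [smul_eq_mul, Real.exp_sub, exp_cgf hs, exp_cgf ht] at this
    refine le_of_eq_of_le ?_ (mul_le_mul_of_nonneg_left this (Real.exp_nonneg _))
    rw [← Real.exp_add]
    ring_nf
  rw [← Real.exp_le_exp, exp_cgf hst]
  calc mgf f μ (a * s + b * t)
      ≤ ∫ x, Real.exp (a * cgf f μ s + b * cgf f μ t) *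
          (a * (Real.exp (s * f x) / mgf f μ s) + b * (Real.exp (t * f x) / mgf f μ t)) ∂μ :=
        integral_mono hst ((((hs.div_const _).const_mul a).add
          ((ht.div_const _).const_mul b)).const_mul _) exp_convex
    _ = Real.exp (a * cgf f μ s + b * cgf f μ t) *
          (a * (mgf f μ s / mgf f μ s) + b * (mgf f μ t / mgf f μ t)) := by
        rw [integral_const_mul, integral_add ((hs.div_const _).const_mul a)
          ((ht.div_const _).const_mul b), integral_const_mul, integral_const_mul,
          integral_div, integral_div, mgf, mgf]
    _ = Real.exp (a * cgf f μ s + b * cgf f μ t) := by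
        rw [div_self (mgf_pos_iff.2 hs).ne', div_self (mgf_pos_iff.2 ht).ne', mul_one, mul_one,
          hab, mul_one]

lemma cgf_tilted [NeZero μ] (hf : Integrable (fun x => Real.exp (f x)) μ)
    (ht : Integrable (fun x => Real.exp ((t + 1) * f x)) μ) :
    cgf f (μ.tilted f) t = cgf f μ (t + 1) - cgf f μ 1 := by
  have hf' : Integrable (fun x => Real.exp (1 * f x)) μ := by simpa only [one_mul] using hf
  rw [cgf, cgf, cgf, ← Real.log_div (mgf_pos_iff.2 ht).ne' (mgf_pos_iff.2 hf').ne', mgf,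
    integral_exp_tilted]
  simp only [mgf, Pi.add_apply, one_mul, add_mul, add_comm]

lemma measure_le_exp_mul_tilted_add_measure [SFinite μ]
    (hf : Integrable (fun x => Real.exp (f x)) μ) (η : ℝ) (S : Set α) :
    μ S ≤ ENNReal.ofReal (Real.exp η) * μ.tilted f S + μ {x | f x ≤ cgf f μ 1 - η} := by
  set B := {x | f x ≤ cgf f μ 1 - η}
  have hfm : AEMeasurable f μ := Real.aemeasurable_of_aemeasurable_exp hf.aemeasurable
  have off_bad : ∀ᵐ x ∂μ, x ∈ S \ B →
      1 ≤ ENNReal.ofReal (Real.exp η) * ENNReal.ofReal (Real.exp (f x - cgf f μ 1)) := by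
    refine ae_of_all _ fun x hx => ?_
    rw [← ENNReal.ofReal_mul (Real.exp_nonneg η), ← Real.exp_add, one_le_ofReal,
      Real.one_le_exp_iff]
    linarith [not_le.1 (show ¬ f x ≤ cgf f μ 1 - η from hx.2)]
  calc μ S ≤ μ (S \ B) + μ B := tsub_le_iff_right.1 le_measure_sdiff
    _ ≤ ENNReal.ofReal (Real.exp η) * μ.tilted f (S \ B) + μ B := by
      gcongr
      have := tilted_mul_apply_cgf (t := 1) (X := f) (S \ B) (by simpa only [one_mul] using hf)
      simp only [one_mul] at this
      rw [this, ← setLIntegral_one, ← lintegral_const_mul' _ _ ofReal_ne_top]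
      exact setLIntegral_mono_ae (by fun_prop) off_bad
    _ ≤ ENNReal.ofReal (Real.exp η) * μ.tilted f S + μ B := by gcongr; exact sdiff_subset

lemma measure_le_exp_mul_tilted_add [IsProbabilityMeasure μ]
    (hf : Integrable (fun x => Real.exp (f x)) μ) (ht : 0 ≤ t)
    (hft : Integrable (fun x => Real.exp (-t * f x)) μ) (η : ℝ) (S : Set α) :
    μ S ≤ ENNReal.ofReal (Real.exp η) * μ.tilted f S +
      ENNReal.ofReal (Real.exp (cgf f μ (-t) + t * (cgf f μ 1 - η))) := by
  refine (measure_le_exp_mul_tilted_add_measure hf η S).trans ?_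
  gcongr
  rw [← ofReal_measureReal]
  refine ENNReal.ofReal_le_ofReal ?_
  simpa only [neg_neg, add_comm] using
    measure_le_le_exp_cgf (cgf f μ 1 - η) (neg_nonpos.2 ht) hft

lemma tilted_le_exp_mul_measure_add [IsProbabilityMeasure μ]
    (hf : Integrable (fun x => Real.exp (f x)) μ) (ht : 1 ≤ t)
    (hft : Integrable (fun x => Real.exp (t * f x)) μ) (η : ℝ) (S : Set α) :
    μ.tilted f S ≤ ENNReal.ofReal (Real.exp η) * μ S +
      ENNReal.ofReal (Real.exp (cgf f μ t - t * cgf f μ 1 - (t - 1) * η)) := by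
  have := isProbabilityMeasure_tilted hf
  have inv_integrable : Integrable (fun x => Real.exp ((-f) x)) (μ.tilted f) := by
    rw [integrable_tilted_iff hf]
    simp [← Real.exp_add]
  have pow_integrable : Integrable (fun x => Real.exp (-(t - 1) * (-f) x)) (μ.tilted f) := by
    rw [integrable_tilted_iff hf]
    refine hft.congr (ae_of_all _ fun x => ?_)
    simp only [smul_eq_mul, Pi.neg_apply, ← Real.exp_add]
    ring_nf
  have bound := measure_le_exp_mul_tilted_add inv_integrable (sub_nonneg.2 ht) pow_integrable η S
  rw [tilted_neg_same hf, cgf_neg, cgf_neg, neg_neg,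
    cgf_tilted hf (by simpa only [sub_add_cancel] using hft),
    cgf_tilted hf (by simp), sub_add_cancel, neg_add_cancel, cgf_zero] at bound
  convert bound using 4
  ring

/-- `(ε, δ)`-indistinguishability of two measures, i.e. closeness in approximate max divergence,
the guarantee of differential privacy. A negative `δ` counts as `0`. -/
def Indistinguishable (ε δ : ℝ) (μ ν : Measure α) : Prop :=
  ∀ S, MeasurableSet S →
    μ S ≤ ENNReal.ofReal (Real.exp ε) * ν S + ENNReal.ofReal δ ∧
      ν S ≤ ENNReal.ofReal (Real.exp ε) * μ S + ENNReal.ofReal δ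

lemma Indistinguishable.mono {ε δ δ' : ℝ} {ν : Measure α} (h : Indistinguishable ε δ μ ν)
    (hδ : δ ≤ δ') : Indistinguishable ε δ' μ ν := fun S hS =>
  ⟨(h S hS).1.trans (by gcongr), (h S hS).2.trans (by gcongr)⟩

theorem indistinguishable_tilted_of_cgf_add_cgf_neg_le [IsProbabilityMeasure μ]
    (hf : ∀ s, Integrable (fun x => Real.exp (s * f x)) μ) {D : ℝ} (ht : 1 ≤ t) (hη : 0 ≤ η)
    (hD : cgf f μ t + cgf f μ (-t) ≤ D) :
    Indistinguishable η (Real.exp (D - (t - 1) * η)) μ (μ.tilted f) := by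
  have hf1 : Integrable (fun x => Real.exp (f x)) μ := by simpa only [one_mul] using hf 1
  have ht0 : 0 < t := one_pos.trans_le ht
  have secant_le {r s : ℝ} (hr : r ≠ 0) (hs : s ≠ 0) (hrs : r ≤ s) :
      cgf f μ r / r ≤ cgf f μ s / s := by
    simpa only [cgf_zero, sub_zero] using
      convexOn_cgf.secant_mono (hf 0) (hf r) (hf s) hr hs hrs
  have above : t * cgf f μ 1 ≤ cgf f μ t := by
    have := secant_le one_ne_zero ht0.ne' ht
    rwa [div_one, le_div_iff₀' ht0] at this
  have below : -(t * cgf f μ 1) ≤ cgf f μ (-t) := by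
    have := secant_le (neg_ne_zero.2 ht0.ne') one_ne_zero (by linarith)
    rw [div_one, div_le_iff_of_neg (neg_lt_zero.2 ht0)] at this
    linarith
  refine fun S _ => ⟨?_, ?_⟩
  · refine (measure_le_exp_mul_tilted_add hf1 ht0.le (hf (-t)) η S).trans ?_
    gcongr
    linarith
  · refine (tilted_le_exp_mul_measure_add hf1 ht (hf t) η S).trans ?_
    gcongr
    linarith

end Tilting

section Convex

lemma lipschitzOnWith_const_mul {α : Type*} [PseudoEMetricSpace α] {s : Set α} {φ : α → ℝ}
    {K : ℝ≥0} (t : ℝ) (hφ : LipschitzOnWith K φ s) :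
    LipschitzOnWith (‖t‖₊ * K) (fun x => t * φ x) s :=
  (lipschitzWith_smul t).comp_lipschitzOnWith hφ

lemma measurable_indicator_ofReal_exp {α : Type*} [TopologicalSpace α] [MeasurableSpace α]
    [OpensMeasurableSpace α] {U : Set α} (hU : IsOpen U) {u : α → ℝ} (hu : ContinuousOn u U) :
    Measurable (U.indicator fun x => ENNReal.ofReal (Real.exp (u x))) := by
  classical
  rw [← piecewise_eq_indicator]
  exact ContinuousOn.measurable_piecewise
    (ENNReal.continuous_ofReal.comp_continuousOn (Real.continuous_exp.comp_continuousOn hu))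
    continuousOn_const hU.measurableSet

variable {E : Type*} [NormedAddCommGroup E] [NormedSpace ℝ E] [FiniteDimensional ℝ E]
  {X : Set E}

lemma exists_sub_mul_norm_sub_le_of_convexOn {F : E → ℝ} (hF : ConvexOn ℝ X F) {x₀ : E}
    (hx₀ : x₀ ∈ interior X) : ∃ K : ℝ≥0, ∀ x ∈ X, F x₀ - K * ‖x - x₀‖ ≤ F x := by
  obtain ⟨K, t, ht, hK⟩ := hF.locallyLipschitzOn_interior hx₀
  rw [isOpen_interior.nhdsWithin_eq hx₀] at ht
  refine ⟨K, fun x hx => ?_⟩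
  have near : ∀ᶠ s in nhdsWithin (0 : ℝ) (Ioi 0), AffineMap.lineMap x₀ x s ∈ t := by
    refine nhdsWithin_le_nhds (AffineMap.lineMap_continuous.continuousAt ?_)
    rwa [AffineMap.lineMap_apply_zero]
  obtain ⟨s, hst, hs0, hs1⟩ := (near.and (Ioo_mem_nhdsGT one_pos)).exists
  have lipschitz : F x₀ - F (AffineMap.lineMap x₀ x s) ≤ K * (s * ‖x - x₀‖) := by
    have := hK.dist_le_mul _ (mem_of_mem_nhds ht) _ hst
    rw [dist_left_lineMap, Real.norm_of_nonneg hs0.le, dist_eq_norm' x₀ x] at this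
    exact (le_abs_self _).trans this
  have convex : F (AffineMap.lineMap x₀ x s) ≤ (1 - s) * F x₀ + s * F x := by
    rw [AffineMap.lineMap_apply_module]
    exact hF.2 (interior_subset hx₀) hx (sub_nonneg.2 hs1.le) hs0.le (sub_add_cancel _ _)
  refine le_of_mul_le_mul_left ?_ hs0
  linarith

variable [MeasurableSpace E] [BorelSpace E] (μ : Measure E) [μ.IsAddHaarMeasure]

lemma restrict_interior_of_convex (hX : Convex ℝ X) : μ.restrict (interior X) = μ.restrict X :=
  Measure.restrict_congr_set (interior_ae_eq_of_null_frontier (hX.addHaar_frontier μ))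

end Convex

section StronglyLogConcave

variable {E : Type*} [NormedAddCommGroup E] [InnerProductSpace ℝ E] {X : Set E}
  {V φ : E → ℝ} {m : ℝ} {K : ℝ≥0}

lemma convexOn_of_strongConvexOn (hV : StrongConvexOn X m V) (hm : 0 ≤ m) : ConvexOn ℝ X V :=
  strongConvexOn_zero.1 (hV.mono hm)

lemma two_mul_midpoint_add_le_of_strongConvexOn (hV : StrongConvexOn X m V) {x y : E} (hx : x ∈ X)
    (hy : y ∈ X) : 2 * V (midpoint ℝ x y) + m / 4 * ‖x - y‖ ^ 2 ≤ V x + V y := by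
  have := hV.2 hx hy (by norm_num : (0 : ℝ) ≤ 2⁻¹) (by norm_num : (0 : ℝ) ≤ 2⁻¹) (by norm_num)
  rw [← smul_add, ← invOf_eq_inv, ← midpoint_eq_smul_add] at this
  simp only [smul_eq_mul, invOf_eq_inv] at this
  linarith

lemma mul_le_div_four_mul_sq_add_sq_div (hm : 0 < m) (k r : ℝ) :
    k * r ≤ m / 4 * r ^ 2 + k ^ 2 / m := by
  have : m / 4 * r ^ 2 + k ^ 2 / m - k * r = (m * r / 2 - k) ^ 2 / m := by field
  linarith [div_nonneg (sq_nonneg (m * r / 2 - k)) hm.le]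

lemma exists_quadratic_sub_le_of_strongConvexOn [FiniteDimensional ℝ E] (hV : StrongConvexOn X m V)
    (hm : 0 < m) (hX : (interior X).Nonempty) :
    ∃ C : ℝ, ∀ x ∈ X, m / 4 * ‖x‖ ^ 2 - C ≤ V x := by
  obtain ⟨x₀, hx₀⟩ := hX
  obtain ⟨k, hk⟩ := exists_sub_mul_norm_sub_le_of_convexOn (strongConvexOn_iff_convex.1 hV) hx₀
  refine ⟨k ^ 2 / m + k * ‖x₀‖ - (V x₀ - m / 2 * ‖x₀‖ ^ 2), fun x hx => ?_⟩
  have triangle : k * ‖x - x₀‖ ≤ k * (‖x‖ + ‖x₀‖) := by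
    gcongr
    exact norm_sub_le x x₀
  linarith [hk x hx, mul_le_div_four_mul_sq_add_sq_div hm k ‖x‖]

variable [FiniteDimensional ℝ E] [MeasurableSpace E] [BorelSpace E]

lemma integrable_exp_neg_mul_sq_norm {b : ℝ} (hb : 0 < b) :
    Integrable (fun x : E => Real.exp (-b * ‖x‖ ^ 2)) := by
  have := (GaussianFourier.integrable_cexp_neg_mul_sq_norm_add (V := E) (b := b)
    (by simpa using hb) 0 0).norm
  refine this.congr (ae_of_all _ fun x => ?_)
  simp only [Complex.norm_exp]
  norm_cast
  simp

lemma integrableOn_exp_sub_of_strongConvexOn (hV : StrongConvexOn X m V) (hm : 0 < m)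
    (hφ : LipschitzOnWith K φ X) : IntegrableOn (fun x => Real.exp (φ x - V x)) X := by
  rw [IntegrableOn, ← restrict_interior_of_convex volume hV.1]
  rcases (interior X).eq_empty_or_nonempty with h_empty | hX
  · simp [h_empty]
  obtain ⟨C, hC⟩ := exists_quadratic_sub_le_of_strongConvexOn hV hm hX
  obtain ⟨x₀, hx₀⟩ := hX
  have growth : ∀ x ∈ X, φ x - V x ≤
      φ x₀ + K * ‖x₀‖ + K ^ 2 / (m / 2) + C + -(m / 8) * ‖x‖ ^ 2 := fun x hx => by
    have lipschitz : φ x - φ x₀ ≤ K * (‖x‖ + ‖x₀‖) :=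
      (le_abs_self _).trans <| (hφ.norm_sub_le hx (interior_subset hx₀)).trans <| by
        gcongr
        exact norm_sub_le x x₀
    linarith [hC x hx, mul_le_div_four_mul_sq_add_sq_div (half_pos hm) K ‖x‖]
  have continuousOn : ContinuousOn (fun x => Real.exp (φ x - V x)) (interior X) :=
    Real.continuous_exp.comp_continuousOn <| (hφ.continuousOn.mono interior_subset).sub
      (convexOn_of_strongConvexOn hV hm.le).continuousOn_interior
  refine Integrable.mono' (((integrable_exp_neg_mul_sq_norm (b := m / 8)
    (by positivity)).const_mul (Real.exp (φ x₀ + K * ‖x₀‖ + K ^ 2 / (m / 2) + C))).integrableOn)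
    (continuousOn.aestronglyMeasurable isOpen_interior.measurableSet)
    (ae_restrict_of_forall_mem isOpen_interior.measurableSet fun x hx => ?_)
  rw [Real.norm_of_nonneg (Real.exp_nonneg _), ← Real.exp_add, Real.exp_le_exp]
  exact growth x (interior_subset hx)

lemma lintegral_exp_sub_mul_lintegral_exp_neg_sub_le (hV : StrongConvexOn X m V) (hm : 0 < m)
    (hφ : LipschitzOnWith K φ X) :
    (∫⁻ x in X, ENNReal.ofReal (Real.exp (φ x - V x))) *
        ∫⁻ x in X, ENNReal.ofReal (Real.exp (-φ x - V x)) ≤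
      (∫⁻ x in X, ENNReal.ofReal (Real.exp (K ^ 2 / m / 2 - V x))) ^ 2 := by
  have hVc := (convexOn_of_strongConvexOn hV hm.le).continuousOn_interior
  have hφc := hφ.continuousOn.mono interior_subset
  simp only [← restrict_interior_of_convex volume hV.1,
    ← lintegral_indicator isOpen_interior.measurableSet]
  refine midpointPrekopaLeindler_volume E
    (measurable_indicator_ofReal_exp isOpen_interior (hφc.sub hVc))
    (measurable_indicator_ofReal_exp isOpen_interior (hφc.neg.sub hVc))
    (measurable_indicator_ofReal_exp isOpen_interior (continuousOn_const.sub hVc)) fun x y => ?_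
  by_cases hx : x ∈ interior X; swap
  · simp [hx]
  by_cases hy : y ∈ interior X; swap
  · simp [hy]
  have lipschitz : φ x - φ y ≤ K * ‖x - y‖ :=
    (le_abs_self _).trans (hφ.norm_sub_le (interior_subset hx) (interior_subset hy))
  rw [indicator_of_mem hx, indicator_of_mem hy,
    indicator_of_mem (hV.1.interior.midpoint_mem hx hy), ← ENNReal.ofReal_mul (Real.exp_nonneg _),
    ← ENNReal.ofReal_pow (Real.exp_nonneg _), ← Real.exp_add, ← Real.exp_nat_mul]
  gcongr
  have := two_mul_midpoint_add_le_of_strongConvexOn hV (interior_subset hx) (interior_subset hy)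
  have := mul_le_div_four_mul_sq_add_sq_div hm K ‖x - y‖
  push_cast
  linarith

lemma integral_exp_sub_mul_integral_exp_neg_sub_le (hV : StrongConvexOn X m V) (hm : 0 < m)
    (hφ : LipschitzOnWith K φ X) :
    (∫ x in X, Real.exp (φ x - V x)) * ∫ x in X, Real.exp (-φ x - V x) ≤
      Real.exp (K ^ 2 / m) * (∫ x in X, Real.exp (-V x)) ^ 2 := by
  have ofReal_integral {K' : ℝ≥0} {ψ : E → ℝ} (hψ : LipschitzOnWith K' ψ X) :
      ∫⁻ x in X, ENNReal.ofReal (Real.exp (ψ x - V x)) =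
        ENNReal.ofReal (∫ x in X, Real.exp (ψ x - V x)) :=
    (ofReal_integral_eq_lintegral_ofReal (integrableOn_exp_sub_of_strongConvexOn hV hm hψ)
      (ae_of_all _ fun _ => Real.exp_nonneg _)).symm
  have integral_nonneg (ψ : E → ℝ) : 0 ≤ ∫ x in X, Real.exp (ψ x - V x) :=
    integral_nonneg fun _ => Real.exp_nonneg _
  have bound := lintegral_exp_sub_mul_lintegral_exp_neg_sub_le hV hm hφ
  rw [ofReal_integral hφ, ofReal_integral (ψ := fun x => -φ x) hφ.neg,
    ofReal_integral (LipschitzWith.const (K ^ 2 / m / 2)).lipschitzOnWith,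
    ← ENNReal.ofReal_mul (integral_nonneg _), ← ENNReal.ofReal_pow (integral_nonneg _),
    ENNReal.ofReal_le_ofReal_iff (sq_nonneg _)] at bound
  simpa only [sub_eq_add_neg _ (V _), Real.exp_add, integral_const_mul, mul_pow,
    ← Real.exp_nat_mul, Nat.cast_ofNat, mul_div_cancel₀ _ (two_ne_zero' ℝ)] using bound

lemma integrableOn_exp_neg_of_strongConvexOn (hV : StrongConvexOn X m V) (hm : 0 < m) :
    IntegrableOn (fun x => Real.exp ((-V) x)) X := by
  simpa only [Pi.neg_apply, zero_sub] using
    integrableOn_exp_sub_of_strongConvexOn hV hm (LipschitzWith.const (0 : ℝ)).lipschitzOnWith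

lemma integrable_exp_mul_tilted_of_strongConvexOn (hV : StrongConvexOn X m V) (hm : 0 < m)
    (hφ : LipschitzOnWith K φ X) (t : ℝ) :
    Integrable (fun x => Real.exp (t * φ x)) ((volume.restrict X).tilted (-V)) := by
  rw [integrable_tilted_iff (integrableOn_exp_neg_of_strongConvexOn hV hm)]
  simpa only [IntegrableOn, smul_eq_mul, Pi.neg_apply, ← Real.exp_add, neg_add_eq_sub] using
    integrableOn_exp_sub_of_strongConvexOn hV hm (lipschitzOnWith_const_mul t hφ)

lemma mgf_mul_mgf_neg_le_of_strongConvexOn (hV : StrongConvexOn X m V) (hm : 0 < m)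
    (hφ : LipschitzOnWith K φ X) (t : ℝ) :
    mgf φ ((volume.restrict X).tilted (-V)) t * mgf φ ((volume.restrict X).tilted (-V)) (-t) ≤
      Real.exp ((t * K) ^ 2 / m) := by
  have mgf_eq (s : ℝ) : mgf φ ((volume.restrict X).tilted (-V)) s =
      (∫ x in X, Real.exp (s * φ x - V x)) / ∫ x in X, Real.exp (-V x) := by
    rw [mgf, integral_exp_tilted]
    simp only [Pi.add_apply, Pi.neg_apply, neg_add_eq_sub]
  have bound := integral_exp_sub_mul_integral_exp_neg_sub_le hV hm (lipschitzOnWith_const_mul t hφ)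
  rw [mgf_eq, mgf_eq, div_mul_div_comm, ← sq]
  refine div_le_of_le_mul₀ (sq_nonneg _) (Real.exp_nonneg _) ?_
  simpa only [neg_mul, NNReal.coe_mul, coe_nnnorm, Real.norm_eq_abs, mul_pow, sq_abs] using bound

theorem cgf_add_cgf_neg_le_of_strongConvexOn [NeZero (volume.restrict X)]
    (hV : StrongConvexOn X m V) (hm : 0 < m) (hφ : LipschitzOnWith K φ X) (t : ℝ) :
    cgf φ ((volume.restrict X).tilted (-V)) t + cgf φ ((volume.restrict X).tilted (-V)) (-t) ≤
      (t * K) ^ 2 / m := by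
  have := isProbabilityMeasure_tilted (integrableOn_exp_neg_of_strongConvexOn hV hm)
  have mgf_pos (s : ℝ) : 0 < mgf φ ((volume.restrict X).tilted (-V)) s :=
    ProbabilityTheory.mgf_pos (integrable_exp_mul_tilted_of_strongConvexOn hV hm hφ s)
  rw [cgf, cgf, ← Real.log_mul (mgf_pos t).ne' (mgf_pos (-t)).ne',
    Real.log_le_iff_le_exp (mul_pos (mgf_pos t) (mgf_pos (-t)))]
  exact mgf_mul_mgf_neg_le_of_strongConvexOn hV hm hφ t

lemma exists_one_le_exp_mul_sub_le {A δ : ℝ} (hA : 0 < A) (hδ : δ ∈ Ioo (0 : ℝ) 1) :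
    ∃ t : ℝ, 1 ≤ t ∧
      Real.exp (t ^ 2 * A / 2 - (t - 1) * (2 * A + √(8 * A * Real.log (2 / δ)))) ≤ δ := by
  set r := √(8 * A * Real.log (2 / δ))
  have hlog : -Real.log δ ≤ Real.log (2 / δ) := by
    rw [Real.log_div two_ne_zero hδ.1.ne']
    linarith [Real.log_nonneg one_le_two]
  have hr : r ^ 2 = 8 * A * Real.log (2 / δ) :=
    Real.sq_sqrt (by nlinarith [Real.log_neg hδ.1 hδ.2])
  have hr0 : 0 ≤ r := Real.sqrt_nonneg _
  -- This `t` minimizes the quadratic exponent.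
  refine ⟨(2 * A + r) / A, (one_le_div hA).2 (by linarith), ?_⟩
  rw [← Real.le_log_iff_exp_le hδ.1]
  have exponent : ((2 * A + r) / A) ^ 2 * A / 2 -
      ((2 * A + r) / A - 1) * (2 * A + r) = -r - 4 * Real.log (2 / δ) := by
    field_simp
    linear_combination -hr
  linarith [Real.log_neg hδ.1 hδ.2]

theorem indistinguishable_tilted_of_strongConvexOn [NeZero (volume.restrict X)]
    (hV : StrongConvexOn X m V) (hm : 0 < m) (hφ : LipschitzOnWith K φ X) (hK : 0 < K)
    {δ : ℝ} (hδ : δ ∈ Ioo (0 : ℝ) 1) :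
    Indistinguishable (2 * (2 * K ^ 2 / m) + √(8 * (2 * K ^ 2 / m) * Real.log (2 / δ))) δ
      ((volume.restrict X).tilted (-V)) ((volume.restrict X).tilted (-V + φ)) := by
  have hexpV := integrableOn_exp_neg_of_strongConvexOn hV hm
  have := isProbabilityMeasure_tilted hexpV
  obtain ⟨t, ht, htδ⟩ := exists_one_le_exp_mul_sub_le (A := 2 * K ^ 2 / m) (by positivity) hδ
  rw [← tilted_tilted hexpV]
  refine (indistinguishable_tilted_of_cgf_add_cgf_neg_le
    (integrable_exp_mul_tilted_of_strongConvexOn hV hm hφ) ht (by positivity)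
    (cgf_add_cgf_neg_le_of_strongConvexOn hV hm hφ t)).mono (le_of_eq_of_le ?_ htδ)
  congr 2
  ring

end StronglyLogConcave

section GibbsMeasure

/-- The Gibbs measure with potential `V` at inverse temperature `β` relative to `m`: the measure
with density proportional to `exp (-β * V x)`, divided by its total mass. It is the
zero measure if that mass is infinite, and also if it is zero. -/
noncomputable def gibbsMeasure {α : Type*} [MeasurableSpace α] (m : Measure α) (β : ℝ)
    (V : α → ℝ) : Measure α :=
  let ρ := m.withDensity fun x => ENNReal.ofReal (Real.exp (-β * V x))
  (ρ univ)⁻¹ • ρ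

lemma gibbsMeasure_eq_tilted {α : Type*} [MeasurableSpace α] {m : Measure α} {β : ℝ} {V : α → ℝ}
    (hV : Integrable (fun x => Real.exp ((-(β • V)) x)) m) :
    gibbsMeasure m β V = m.tilted (-(β • V)) := by
  rcases eq_zero_or_neZero m with rfl | _
  · simp [gibbsMeasure]
  have partition_function : ∫⁻ x, ENNReal.ofReal (Real.exp ((-(β • V)) x)) ∂m =
      ENNReal.ofReal (∫ x, Real.exp ((-(β • V)) x) ∂m) :=
    (ofReal_integral_eq_lintegral_ofReal hV (ae_of_all _ fun _ => Real.exp_nonneg _)).symm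
  have hZ := integral_exp_pos hV
  have density_eq : (fun x => ENNReal.ofReal (Real.exp (-β * V x))) =
      fun x => ENNReal.ofReal (Real.exp ((-(β • V)) x)) := by
    simp only [neg_mul, Pi.neg_apply, Pi.smul_apply, smul_eq_mul]
  ext S hS
  rw [gibbsMeasure, density_eq, Measure.smul_apply, smul_eq_mul,
    withDensity_apply _ MeasurableSet.univ, withDensity_apply _ hS, setLIntegral_univ,
    partition_function, tilted_apply' _ _ hS, ← ENNReal.ofReal_inv_of_pos hZ,
    ← lintegral_const_mul' _ _ ofReal_ne_top]
  simp only [← ENNReal.ofReal_mul (inv_pos.2 hZ).le, inv_mul_eq_div]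

variable {E : Type*} [NormedAddCommGroup E] [InnerProductSpace ℝ E] {X : Set E} {β : ℝ}

lemma strongConvexOn_const_smul {V : E → ℝ} {m : ℝ} (hV : StrongConvexOn X m V) (hβ : 0 ≤ β) :
    StrongConvexOn X (β * m) (β • V) := by
  rw [strongConvexOn_iff_convex] at hV ⊢
  convert! hV.smul hβ using 2 with x
  simp only [Pi.smul_apply, smul_eq_mul]
  ring

variable [FiniteDimensional ℝ E] [MeasurableSpace E] [BorelSpace E] {K : ℝ≥0} {ℓ : E → ℝ} {δ : ℝ}

theorem indistinguishable_gibbsMeasure_of_strongConvexOn (hX : volume X ≠ 0) {V : E → ℝ} {m : ℝ}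
    (hV : StrongConvexOn X m V) (hm : 0 < m) (hℓ : LipschitzOnWith K ℓ X) (hK : 0 < K)
    (hβ : 0 < β) (hδ : δ ∈ Ioo (0 : ℝ) 1) :
    Indistinguishable (4 * β * K ^ 2 / m + √(16 * β * K ^ 2 * Real.log (2 / δ) / m)) δ
      (gibbsMeasure (volume.restrict X) β V) (gibbsMeasure (volume.restrict X) β (V + ℓ)) := by
  have : NeZero (volume.restrict X) := ⟨Measure.restrict_eq_zero.not.2 hX⟩
  have hβV := strongConvexOn_const_smul hV hβ.le
  have hβm := mul_pos hβ hm
  have hβℓ : LipschitzOnWith (‖-β‖₊ * K) (-β • ℓ) X := lipschitzOnWith_const_mul (-β) hℓ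
  have potential_add : -(β • (V + ℓ)) = -(β • V) + -β • ℓ := by module
  have exp_add_integrable : IntegrableOn (fun x => Real.exp ((-(β • (V + ℓ))) x)) X := by
    rw [potential_add]
    simpa only [Pi.add_apply, Pi.neg_apply, neg_add_eq_sub] using
      integrableOn_exp_sub_of_strongConvexOn hβV hβm hβℓ
  rw [gibbsMeasure_eq_tilted (integrableOn_exp_neg_of_strongConvexOn hβV hβm),
    gibbsMeasure_eq_tilted exp_add_integrable, potential_add]
  convert! indistinguishable_tilted_of_strongConvexOn hβV hβm hβℓ
    (mul_pos (nnnorm_pos.2 (neg_ne_zero.2 hβ.ne')) hK) hδ using 1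
  have variance_proxy : 2 * (↑(‖-β‖₊ * K) : ℝ) ^ 2 / (β * m) = 2 * β * K ^ 2 / m := by
    simp only [NNReal.coe_mul, coe_nnnorm, norm_neg, Real.norm_of_nonneg hβ.le]
    field
  rw [variance_proxy]
  ring_nf

theorem rmw_stability_general (hX : volume X ≠ 0) {lam : ℝ} (hβ : 0 < β) (hlam : 0 < lam)
    (hK : 0 < K) (hδ : δ ∈ Ioo (0 : ℝ) 1) {F : E → ℝ} (hF : ConvexOn ℝ X F)
    (hℓ : LipschitzOnWith K ℓ X) :
    Indistinguishable (2 * β * K ^ 2 / lam + √(8 * β * K ^ 2 * Real.log (2 / δ) / lam)) δ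
      (gibbsMeasure (volume.restrict X) β fun x => F x + lam * ‖x‖ ^ 2)
      (gibbsMeasure (volume.restrict X) β fun x => F x + ℓ x + lam * ‖x‖ ^ 2) := by
  have regularized : StrongConvexOn X (2 * lam) fun x => F x + lam * ‖x‖ ^ 2 := by
    rw [strongConvexOn_iff_convex]
    convert! hF using 2 with x
    ring
  have potential_add : (fun x => F x + ℓ x + lam * ‖x‖ ^ 2) =
      (fun x => F x + lam * ‖x‖ ^ 2) + ℓ := by
    ext x
    simp only [Pi.add_apply]
    ring
  rw [potential_add]
  convert! indistinguishable_gibbsMeasure_of_strongConvexOn hX regularized (by positivity) hℓ hK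
    hβ hδ using 1
  ring_nf

end GibbsMeasure

end

/-- One-step stability of the regularized multiplicative weights (Gibbs) measure:
on a nonempty compact convex `X ⊆ ℝ^d` of positive Lebesgue measure, the normalized
Gibbs measures with potentials `F(x) + λ‖x‖²` and `F(x) + ℓ(x) + λ‖x‖²` (inverse
temperature `β`, with `ℓ` convex and `L`-Lipschitz) are `(η, δ₀)`-indistinguishable
for `η = 2βL²/λ + √(8βL² log(2/δ₀)/λ)`. -/
theorem rmw_stability (d : ℕ) (hd : 1 ≤ d) (X : Set (EuclideanSpace ℝ (Fin d)))
    (hXne : X.Nonempty) (hXcompact : IsCompact X) (hXconvex : Convex ℝ X)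
    (hXpos : 0 < volume X)
    (β lam L δ₀ : ℝ) (hβ : 0 < β) (hlam : 0 < lam) (hL : 0 < L)
    (hδ₀ : δ₀ ∈ Set.Ioo (0 : ℝ) 1)
    (F ℓ : EuclideanSpace ℝ (Fin d) → ℝ)
    (hFconv : ConvexOn ℝ Set.univ F) (hℓconv : ConvexOn ℝ Set.univ ℓ)
    (hℓlip : LipschitzWith (Real.toNNReal L) ℓ) :
    let m := volume.restrict X
    let μ' := m.withDensity fun x => ENNReal.ofReal (Real.exp (-β * (F x + lam * ‖x‖ ^ 2)))
    let ν' := m.withDensity fun x =>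
      ENNReal.ofReal (Real.exp (-β * (F x + ℓ x + lam * ‖x‖ ^ 2)))
    let μ := (μ' Set.univ)⁻¹ • μ'
    let ν := (ν' Set.univ)⁻¹ • ν'
    let η := 2 * β * L ^ 2 / lam + Real.sqrt (8 * β * L ^ 2 * Real.log (2 / δ₀) / lam)
    ∀ S : Set (EuclideanSpace ℝ (Fin d)), MeasurableSet S →
      μ S ≤ ENNReal.ofReal (Real.exp η) * ν S + ENNReal.ofReal δ₀ ∧
        ν S ≤ ENNReal.ofReal (Real.exp η) * μ S + ENNReal.ofReal δ₀ := by
  exact Real.coe_toNNReal L hL.le ▸ rmw_stability_general hXpos.ne' hβ hlam (Real.toNNReal_pos.2 hL)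
    hδ₀ (hFconv.subset (Set.subset_univ X) hXconvex) hℓlip.lipschitzOnWith
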